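/- Let r ≥ 7 be an integer with gcd(6,r) = 1, let q ∈ ℤ, and let G = ⟨s₁, s₂, f | s₁² = f, s₂³ = f, (s₁s₂)^r = f^q⟩. Let k, l ∈ ℤ and suppose that (g,h) = (s₁s₂s₁s₂⁻¹f^k, s₂⁻¹s₁s₂s₁f^l) is an invertible generating pair of G. Then k = l = -1 and 6q - 5r ∈ {-1, 1}. -/

import Mathlib

/-!
Conjugation by `s₁` already inverts both `s₁s₂s₁s₂⁻¹` and `s₂⁻¹s₁s₂s₁` up to powers of the central
element `f`. Hence, given an inversion `α` relative to `(g, h)`, every `α x` equals `s₁ x s₁⁻¹`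
times a power of `f`: this holds for `g` and `h`, and they generate. Let `a`, `b`, `c` be the
exponents for `s₁`, `s₂`, `f`. If `f` has infinite order, the relations give `2a = c`, `3b = c`
and `r(a + b) = qc`, so `(6q - 5r)c = 0`; as `6 ∤ r`, all three vanish and `α` is conjugation by
`s₁`. Comparing `s₁ g s₁⁻¹` with `g⁻¹` gives `f ^ (2k + 2) = 1`, so `k = -1`, and likewise `l = -1`
(`inversion_exponents`). Now `g` and `h` vanish in the abelianization `ℤ/(6q - 5r)`, where
`s₁, s₂, f` are `3, 2, 6`; since `g` and `h` generate, this quotient is trivial.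

It remains to see that `f` has infinite order (`F_zpow_eq_one`). The group acts on `ℍ × ℂ` by maps
`(z, w) ↦ (M z, w + θ z)`, where `exp θ` is, up to a constant, the factor of automorphy `cz + d` of
`M ∈ SL₂(ℝ)`; this is a model of the universal cover of `SL₂(ℝ)` with enlarged centre. For the
elliptic generators of the triangle group `(2,3,r)`, the powers of these lifts are translations of
the fibre `ℂ`, and the amount of translation is read off at the fixed point of `M`
(`skew_elliptic_pow`). This gives `X² = Y³ = T(πi)` and `(XY)^r = T((r-1)πi)`. After
correcting `X` and `Y` by central translations, the relations of the group hold with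
`f ↦ T(πi(r-6)/(6q-5r))`, a nonzero translation because `r ≠ 6`.
-/

/-- Relators of G = ⟨s₁,s₂,f | s₁² = f, s₂³ = f, (s₁s₂)^r = f^q⟩ on the generators
s₁ = of 0, s₂ = of 1, f = of 2. -/
def seifertRels (r : ℕ) (q : ℤ) : Set (FreeGroup (Fin 3)) :=
  {FreeGroup.of 0 ^ 2 * (FreeGroup.of 2)⁻¹,
   FreeGroup.of 1 ^ 3 * (FreeGroup.of 2)⁻¹,
   (FreeGroup.of 0 * FreeGroup.of 1) ^ r * FreeGroup.of 2 ^ (-q)}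

/-- The fundamental group of a Seifert manifold over S²(2,3,r). -/
abbrev Sft (r : ℕ) (q : ℤ) := PresentedGroup (seifertRels r q)

/-- The generator s₁. -/
def S₁ (r : ℕ) (q : ℤ) : Sft r q := PresentedGroup.of 0

/-- The generator s₂. -/
def S₂ (r : ℕ) (q : ℤ) : Sft r q := PresentedGroup.of 1

/-- The central element f (the class of the regular fiber). -/
def F (r : ℕ) (q : ℤ) : Sft r q := PresentedGroup.of 2

section

open UpperHalfPlane hiding I
open Complex MatrixGroups

/-! ### Lifts of Möbius transformations to `ℍ × ℂ` -/

/-- The factor of automorphy `c z + d` of a matrix with bottom row `(c, d)`. -/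
noncomputable def autFactor (M : SL(2, ℝ)) (z : ℍ) : ℂ := (M 1 0 : ℝ) * (z : ℂ) + (M 1 1 : ℝ)

theorem autFactor_ne_zero (M : SL(2, ℝ)) (z : ℍ) : autFactor M z ≠ 0 :=
  UpperHalfPlane.denom_ne_zero (M : GL (Fin 2) ℝ) z

theorem coe_smul_eq (M : SL(2, ℝ)) (z : ℍ) :
    ((M • z : ℍ) : ℂ) = ((M 0 0 : ℝ) * (z : ℂ) + (M 0 1 : ℝ)) / autFactor M z := by
  rw [UpperHalfPlane.coe_specialLinearGroup_apply]; rfl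

theorem autFactor_mul (M N : SL(2, ℝ)) (z : ℍ) :
    autFactor (M * N) z = autFactor M (N • z) * autFactor N z := by
  have h := autFactor_ne_zero N z
  rw [autFactor, autFactor, coe_smul_eq]
  field_simp
  simp only [autFactor, Matrix.SpecialLinearGroup.coe_mul, Matrix.mul_apply, Fin.sum_univ_two]
  push_cast
  ring

/-- The permutation `(z, w) ↦ (M z, w + θ z)` of `ℍ × ℂ`, a lift of the Möbius transformation `M`. -/
noncomputable def skew (M : SL(2, ℝ)) (θ : ℍ → ℂ) : Equiv.Perm (ℍ × ℂ) where
  toFun p := (M • p.1, p.2 + θ p.1)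
  invFun p := (M⁻¹ • p.1, p.2 - θ (M⁻¹ • p.1))
  left_inv p := by simp
  right_inv p := by simp

theorem skew_mul (M N : SL(2, ℝ)) (θ η : ℍ → ℂ) :
    skew M θ * skew N η = skew (M * N) (fun z => θ (N • z) + η z) := by
  ext1 p
  simp [skew, mul_smul]
  ring

/-- Translations `(z, w) ↦ (z, w + t)` of the fibre, as a homomorphism in `t`. -/
noncomputable def fibreTranslation : Multiplicative ℂ →* Equiv.Perm (ℍ × ℂ) where
  toFun t := skew 1 (fun _ => t.toAdd)
  map_one' := by ext1 p; simp [skew]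
  map_mul' s t := by rw [skew_mul]; simp

theorem fibreTranslation_comm (t : Multiplicative ℂ) (M : SL(2, ℝ)) (θ : ℍ → ℂ) :
    Commute (skew M θ) (fibreTranslation t) := by
  change skew M θ * skew 1 _ = skew 1 _ * skew M θ
  rw [skew_mul, skew_mul]
  simp [add_comm]

/-- A continuous logarithm of a constant function on the connected space `ℍ` is constant, since it
takes values in a translate of `2πiℤ`. -/
theorem const_of_exp_const (ψ : ℍ → ℂ) (hc : Continuous ψ) (h : ∀ z w, exp (ψ z) = exp (ψ w))
    (z w : ℍ) : ψ z = ψ w := by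
  choose n hn using fun z => Complex.exp_eq_exp_iff_exists_int.1 (h z w)
  have hpi : (2 * Real.pi * I : ℂ) ≠ 0 := Complex.two_pi_I_ne_zero
  have hcont : Continuous n := by
    rw [Int.isClosedEmbedding_coe_real.isEmbedding.continuous_iff]
    have : ((↑) ∘ n : ℍ → ℝ) = fun z => ((ψ z - ψ w) / (2 * Real.pi * I)).re := by
      funext z
      have : (ψ z - ψ w) / (2 * Real.pi * I) = ((n z : ℝ) : ℂ) := by
        rw [hn z]; field_simp; push_cast; ring
      rw [this]; simp
    rw [this]
    fun_prop
  have h1 : n z = n w := PreconnectedSpace.constant inferInstance hcont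
  have h2 : (n w : ℂ) * (2 * Real.pi * I) = 0 := by linear_combination -(hn w)
  rw [hn z, h1, h2, add_zero]

/-- Powers of a matrix of determinant `1` and trace `2 cos φ`: Cayley–Hamilton and the recursion
`sin ((n+1)φ) = 2 cos φ sin (nφ) - sin ((n-1)φ)`. -/
theorem sin_smul_pow (M : SL(2, ℝ)) (φ : ℝ) (htr : M 0 0 + M 1 1 = 2 * Real.cos φ) (n : ℕ) :
    Real.sin φ • (M : Matrix (Fin 2) (Fin 2) ℝ) ^ n =
      Real.sin (n * φ) • (M : Matrix (Fin 2) (Fin 2) ℝ) - Real.sin (n * φ - φ) • 1 := by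
  have hdet := M.det_coe
  rw [Matrix.det_fin_two] at hdet
  induction n with
  | zero => simp
  | succ n ih =>
    have hsq : (M : Matrix (Fin 2) (Fin 2) ℝ) * M =
        (2 * Real.cos φ) • (M : Matrix (Fin 2) (Fin 2) ℝ) - 1 := by
      rw [← htr]
      ext i j
      fin_cases i <;> fin_cases j <;> simp [Matrix.mul_apply, Fin.sum_univ_two] <;>
        first | ring1 | linear_combination -hdet
    have h1 : Real.sin (((n + 1 : ℕ) : ℝ) * φ) =
        2 * Real.cos φ * Real.sin (n * φ) - Real.sin (n * φ - φ) := by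
      push_cast; rw [add_mul, one_mul, Real.sin_add, Real.sin_sub]; ring
    have h2 : ((n + 1 : ℕ) : ℝ) * φ - φ = n * φ := by push_cast; ring
    rw [pow_succ, ← smul_mul_assoc, ih, sub_mul, smul_mul_assoc, hsq, h1, h2, smul_mul_assoc, one_mul,
      smul_sub, smul_smul, sub_smul, mul_comm (Real.sin _)]
    abel

/-- An elliptic matrix with eigenvalues `exp (±iφ)` and positive lower left entry has a fixed point
in `ℍ`, where its factor of automorphy is `exp (iφ)`. -/
theorem exists_fixedPoint (M : SL(2, ℝ)) (φ : ℝ) (h0 : 0 < φ) (hπ : φ < Real.pi)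
    (htr : M 0 0 + M 1 1 = 2 * Real.cos φ) (hc : 0 < M 1 0) :
    ∃ z : ℍ, M • z = z ∧ autFactor M z = exp (φ * I) := by
  have hdet := M.det_coe
  rw [Matrix.det_fin_two] at hdet
  have hcC : ((M 1 0 : ℝ) : ℂ) ≠ 0 := by exact_mod_cast hc.ne'
  have him : 0 < ((exp (φ * I) - (M 1 1 : ℝ)) / ((M 1 0 : ℝ) : ℂ)).im := by
    rw [Complex.div_ofReal_im]
    apply div_pos _ hc
    simpa [Complex.exp_ofReal_mul_I_im] using Real.sin_pos_of_pos_of_lt_pi h0 hπ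
  refine ⟨⟨_, him⟩, ?_⟩
  have h2 : autFactor M ⟨_, him⟩ = exp (φ * I) := by
    simp only [autFactor]
    field_simp
    ring
  refine ⟨?_, h2⟩
  ext
  rw [coe_smul_eq, h2, div_eq_iff (Complex.exp_ne_zero _)]
  have htr' : ((M 0 0 : ℝ) : ℂ) + (M 1 1 : ℝ) = exp (φ * I) + exp (-φ * I) := by
    rw [← Complex.ofReal_add, htr, Complex.ofReal_mul, Complex.ofReal_cos, ← Complex.two_cos]; simp
  have hE : exp (φ * I) * exp (-φ * I) = 1 := by rw [← Complex.exp_add]; simp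
  have hdet' : ((M 0 0 : ℝ) : ℂ) * (M 1 1 : ℝ) - (M 0 1 : ℝ) * (M 1 0 : ℝ) = 1 := by
    exact_mod_cast hdet
  simp only
  field_simp
  linear_combination exp (φ * I) * htr' + hE - hdet'

/-- If `θ` is a logarithm of the factor of automorphy of `M`, then the `n`-th power of the lift is the
lift of `M ^ n` by such a logarithm, with value `n θ(z₀)` at a fixed point `z₀` of `M`. -/
theorem skew_pow (M : SL(2, ℝ)) (θ : ℍ → ℂ) (hθ : Continuous θ)
    (hexp : ∀ z, exp (θ z) = autFactor M z) (z₀ : ℍ) (hz₀ : M • z₀ = z₀) (n : ℕ) :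
    ∃ ψ : ℍ → ℂ, Continuous ψ ∧ (∀ z, exp (ψ z) = autFactor (M ^ n) z) ∧ ψ z₀ = n * θ z₀ ∧
      skew M θ ^ n = skew (M ^ n) ψ := by
  induction n with
  | zero => exact ⟨0, continuous_const, by simp [autFactor], by simp, by ext1 p; simp [skew]⟩
  | succ n ih =>
    obtain ⟨ψ, h1, h2, h3, h4⟩ := ih
    refine ⟨fun z => ψ (M • z) + θ z, ?_, ?_, ?_, ?_⟩
    · exact (h1.comp (continuous_const_smul M)).add hθ
    · intro z
      rw [Complex.exp_add, h2, hexp, pow_succ, autFactor_mul]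
    · simp only [hz₀, h3]; push_cast; ring
    · rw [pow_succ, h4, skew_mul, pow_succ]

/-- If `M` is elliptic with angle `φ`, where `nφ = mπ`, and `θ` is the logarithm of its factor of
automorphy with imaginary part in `(0, 2π)`, then the `n`-th power of the lift is the fibre
translation by `mπi`. -/
theorem skew_elliptic_pow (M : SL(2, ℝ)) (φ : ℝ) (h0 : 0 < φ) (hπ : φ < Real.pi)
    (htr : M 0 0 + M 1 1 = 2 * Real.cos φ) (hc : 0 < M 1 0)
    (θ : ℍ → ℂ) (hθ : Continuous θ) (hexp : ∀ z, exp (θ z) = autFactor M z)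
    (him : ∀ z, 0 < (θ z).im ∧ (θ z).im < 2 * Real.pi)
    (n m : ℕ) (hnm : n * φ = m * Real.pi) :
    skew M θ ^ n = fibreTranslation (Multiplicative.ofAdd (m * (Real.pi * I))) := by
  obtain ⟨z₀, hz₀, hj⟩ := exists_fixedPoint M φ h0 hπ htr hc
  obtain ⟨ψ, h1, h2, h3, h4⟩ := skew_pow M θ hθ hexp z₀ hz₀ n
  have hs := Real.sin_pos_of_pos_of_lt_pi h0 hπ
  -- `M ^ n` is the scalar matrix `± 1`
  have hMn : (M : Matrix (Fin 2) (Fin 2) ℝ) ^ n = Real.cos (m * Real.pi) • 1 := by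
    have := sin_smul_pow M φ htr n
    rw [hnm, Real.sin_sub, Real.sin_nat_mul_pi] at this
    have h5 : Real.sin φ • (M : Matrix (Fin 2) (Fin 2) ℝ) ^ n =
        Real.sin φ • (Real.cos (m * Real.pi) • 1) := by
      rw [this, smul_smul, mul_comm (Real.sin φ)]; simp
    exact smul_right_injective _ hs.ne' h5
  -- the bounds on `Im θ` single out the branch of the logarithm of `exp (iφ)`
  have hθ₀ : θ z₀ = φ * I := by
    obtain ⟨k, hk⟩ := Complex.exp_eq_exp_iff_exists_int.1 ((hexp z₀).trans hj)
    have h5 := congrArg Complex.im hk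
    have h6 : (θ z₀).im = φ + k * (2 * Real.pi) := by rw [h5]; simp
    have := him z₀
    have hpi := Real.pi_pos
    have hk1 : -1 < (k : ℝ) := by nlinarith
    have hk2 : (k : ℝ) < 1 := by nlinarith
    have hk0 : k = 0 := by
      have : -1 < k := by exact_mod_cast hk1
      have : k < 1 := by exact_mod_cast hk2
      omega
    rw [hk, hk0]; simp
  have e10 : (M ^ n : SL(2, ℝ)) 1 0 = 0 := by
    rw [Matrix.SpecialLinearGroup.coe_pow, hMn]; simp
  have e01 : (M ^ n : SL(2, ℝ)) 0 1 = 0 := by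
    rw [Matrix.SpecialLinearGroup.coe_pow, hMn]; simp
  have ed : (M ^ n : SL(2, ℝ)) 0 0 = (M ^ n : SL(2, ℝ)) 1 1 := by
    rw [Matrix.SpecialLinearGroup.coe_pow, hMn]; simp
  have hψ : ∀ z, ψ z = m * (Real.pi * I) := by
    intro z
    rw [const_of_exp_const ψ h1 (fun z w => by rw [h2, h2]; simp [autFactor, e10]) z z₀, h3, hθ₀]
    have : ((n * φ : ℝ) : ℂ) = ((m * Real.pi : ℝ) : ℂ) := by rw [hnm]
    push_cast at this
    linear_combination I * this
  have hact : ∀ z : ℍ, M ^ n • z = z := by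
    intro z
    have hne := autFactor_ne_zero (M ^ n) z
    ext
    rw [coe_smul_eq, div_eq_iff hne]
    simp only [autFactor, e10, e01, ed]
    push_cast; ring
  rw [h4]
  ext1 p
  simp [skew, fibreTranslation, hact, hψ]

/-! ### The triangle group and the order of the fibre -/

/-- Lifts of the generators of the hyperbolic triangle group `(2, 3, r)`. -/
theorem exists_triangle_lift (r : ℕ) (hr : 7 ≤ r) : ∃ (A B : SL(2, ℝ)) (θ η : ℍ → ℂ),
    skew A θ ^ 2 = fibreTranslation (Multiplicative.ofAdd (Real.pi * I)) ∧
    skew B η ^ 3 = fibreTranslation (Multiplicative.ofAdd (Real.pi * I)) ∧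
    (skew A θ * skew B η) ^ r =
      fibreTranslation (Multiplicative.ofAdd ((r - 1) * (Real.pi * I))) := by
  have hπ := Real.pi_pos
  have hr' : (7 : ℝ) ≤ r := by exact_mod_cast hr
  have hr0 : (0 : ℝ) < r := by linarith
  have hlt : Real.pi / r < Real.pi / 6 := by
    apply div_lt_div_of_pos_left hπ (by norm_num); linarith
  set t : ℝ := 2 * Real.cos (Real.pi / r) with ht
  have hcos : Real.cos (Real.pi / 6) < Real.cos (Real.pi / r) :=
    Real.cos_lt_cos_of_nonneg_of_le_pi (by positivity) (by linarith) hlt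
  rw [Real.cos_pi_div_six] at hcos
  have h3 : 0 < √(3:ℝ) := by positivity
  have h3' : √(3:ℝ) ^ 2 = 3 := Real.sq_sqrt (by norm_num)
  have ht0 : 0 < t := by rw [ht]; linarith
  have ht3 : 3 ≤ t ^ 2 := by rw [ht]; nlinarith
  -- `c` is chosen so that `A * B` below has trace `-(c + 3 / (4 * c)) = -t = 2 cos (π - π / r)`;
  -- this is possible because `t ≥ √3`, which is where the base being hyperbolic enters
  set c : ℝ := (t + √(t ^ 2 - 3)) / 2 with hcdef
  have hc : 0 < c := by positivity
  have hceq : c * c + 3 / 4 = t * c := by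
    have := Real.sq_sqrt (sub_nonneg.2 ht3)
    rw [hcdef]; nlinarith
  let A : SL(2, ℝ) := ⟨!![0, -1; 1, 0], by simp [Matrix.det_fin_two]⟩
  let B : SL(2, ℝ) := ⟨!![1 / 2, -3 / (4 * c); c, 1 / 2], by
    rw [Matrix.det_fin_two]; simp; field_simp; norm_num⟩
  have logIm : ∀ (M : SL(2, ℝ)), 0 < M 1 0 → ∀ z : ℍ, 0 < (autFactor M z).im := by
    intro M hM z
    simpa [autFactor] using mul_pos hM z.im_pos
  have hcont : ∀ (M : SL(2, ℝ)), 0 < M 1 0 → Continuous fun z => Complex.log (autFactor M z) := by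
    intro M hM
    refine Continuous.clog ?_ fun z => Or.inr (logIm M hM z).ne'
    unfold autFactor
    exact (continuous_const.mul UpperHalfPlane.continuous_coe).add continuous_const
  have hbd : ∀ (M : SL(2, ℝ)), 0 < M 1 0 → ∀ z : ℍ,
      0 < (Complex.log (autFactor M z)).im ∧ (Complex.log (autFactor M z)).im < Real.pi := by
    intro M hM z
    have := logIm M hM z
    rw [Complex.log_im]
    refine ⟨lt_of_le_of_ne (Complex.arg_nonneg_iff.2 this.le) fun h => ?_, ?_⟩
    · exact this.ne' (Complex.arg_eq_zero_iff.1 h.symm).2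
    · refine lt_of_le_of_ne (Complex.arg_le_pi _) fun h => ?_
      exact this.ne' (Complex.arg_eq_pi_iff.1 h).2
  have hexp : ∀ (M : SL(2, ℝ)) (z : ℍ), exp (Complex.log (autFactor M z)) = autFactor M z :=
    fun M z => Complex.exp_log (autFactor_ne_zero M z)
  have hA : 0 < A 1 0 := by simp [A]
  have hB : 0 < B 1 0 := by simpa [B] using hc
  refine ⟨A, B, fun z => Complex.log (autFactor A z), fun z => Complex.log (autFactor B z),
    ?_, ?_, ?_⟩
  · rw [skew_elliptic_pow A (Real.pi / 2) (by positivity) (by linarith) (by simp [A]) hA _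
      (hcont A hA) (hexp A) (fun z => ⟨(hbd A hA z).1, by linarith [(hbd A hA z).2]⟩) 2 1
      (by push_cast; ring)]
    simp
  · rw [skew_elliptic_pow B (Real.pi / 3) (by positivity) (by linarith)
      (by simp only [B, Real.cos_pi_div_three]; norm_num) hB _
      (hcont B hB) (hexp B) (fun z => ⟨(hbd B hB z).1, by linarith [(hbd B hB z).2]⟩) 3 1
      (by push_cast; ring)]
    simp
  · rw [skew_mul, skew_elliptic_pow (A * B) (Real.pi - Real.pi / r) (by linarith)
      (by have : 0 < Real.pi / r := by positivity
          linarith) ?_ ?_ _ ?_ ?_ ?_ r (r - 1) ?_]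
    · rw [Nat.cast_sub (by omega)]; simp
    · rw [Real.cos_pi_sub]
      have : -c + -3 / (4 * c) = - t := by field_simp; linarith
      rw [Matrix.SpecialLinearGroup.coe_mul]
      simp [A, B, Matrix.mul_apply, Fin.sum_univ_two]
      linarith
    · rw [Matrix.SpecialLinearGroup.coe_mul]
      simp [A, B, Matrix.mul_apply, Fin.sum_univ_two]
    · exact ((hcont A hA).comp (continuous_const_smul B)).add (hcont B hB)
    · intro z
      rw [Complex.exp_add, hexp, hexp, autFactor_mul]
    · intro z
      have h1 := hbd A hA (B • z)
      have h2 := hbd B hB z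
      simp only [Complex.add_im]
      constructor <;> linarith
    · rw [Nat.cast_sub (by omega)]; field_simp; push_cast; ring

theorem fibreTranslation_injective : Function.Injective fibreTranslation := by
  rw [injective_iff_map_eq_one]
  intro t ht
  have := congrArg (fun e : Equiv.Perm (ℍ × ℂ) => (e (UpperHalfPlane.I, 0)).2) ht
  simpa [fibreTranslation, skew] using this

theorem S₁_sq (r : ℕ) (q : ℤ) : S₁ r q ^ 2 = F r q :=
  mul_inv_eq_one.1 <| PresentedGroup.one_of_mem (rels := seifertRels r q)
    (x := FreeGroup.of 0 ^ 2 * (FreeGroup.of 2)⁻¹) (by simp [seifertRels])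

theorem S₂_cube (r : ℕ) (q : ℤ) : S₂ r q ^ 3 = F r q :=
  mul_inv_eq_one.1 <| PresentedGroup.one_of_mem (rels := seifertRels r q)
    (x := FreeGroup.of 1 ^ 3 * (FreeGroup.of 2)⁻¹) (by simp [seifertRels])

theorem S₁_mul_S₂_pow (r : ℕ) (q : ℤ) : (S₁ r q * S₂ r q) ^ r = F r q ^ q := by
  have h : (S₁ r q * S₂ r q) ^ r * F r q ^ (-q) = 1 :=
    PresentedGroup.one_of_mem (rels := seifertRels r q)
      (x := (FreeGroup.of 0 * FreeGroup.of 1) ^ r * FreeGroup.of 2 ^ (-q)) (by simp [seifertRels])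
  rwa [zpow_neg, mul_inv_eq_one] at h

/-- The universal property of the presentation. -/
theorem exists_hom {H : Type*} [Group H] (r : ℕ) (q : ℤ) (x y c : H) (hx : x ^ 2 = c)
    (hy : y ^ 3 = c) (hxy : (x * y) ^ r = c ^ q) :
    ∃ ρ : Sft r q →* H, ρ (S₁ r q) = x ∧ ρ (S₂ r q) = y ∧ ρ (F r q) = c := by
  have hrel : ∀ w ∈ seifertRels r q, FreeGroup.lift ![x, y, c] w = 1 := by
    rintro w (rfl | rfl | rfl) <;> simp [hx, hy, hxy]
  exact ⟨PresentedGroup.toGroup hrel, PresentedGroup.toGroup.of hrel,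
    PresentedGroup.toGroup.of hrel, PresentedGroup.toGroup.of hrel⟩

/-- The regular fibre has infinite order. -/
theorem F_zpow_eq_one (r : ℕ) (hr : 7 ≤ r) (q : ℤ) (hq : 6 * q - 5 * (r : ℤ) ≠ 0) (n : ℤ)
    (hn : F r q ^ n = 1) : n = 0 := by
  obtain ⟨A, B, θ, η, hA, hB, hAB⟩ := exists_triangle_lift r hr
  have hqC : (6 * q - 5 * r : ℂ) ≠ 0 := by exact_mod_cast hq
  have hrC : (r - 6 : ℂ) ≠ 0 := by
    have : (r : ℤ) - 6 ≠ 0 := by omega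
    exact_mod_cast this
  have hpi : (Real.pi * I : ℂ) ≠ 0 := by simp [Real.pi_ne_zero]
  -- `W` solves the equations imposed by the three relations on the central corrections
  obtain ⟨W, hW⟩ : ∃ W : ℂ, W = (r - 6) / (6 * q - 5 * r) := ⟨_, rfl⟩
  have hW' : W * (6 * q - 5 * r) = r - 6 := by rw [hW, div_mul_cancel₀ _ hqC]
  have hW0 : W ≠ 0 := by rw [hW]; exact div_ne_zero hrC hqC
  set X := skew A θ
  set Y := skew B η
  let T : ℂ → Equiv.Perm (ℍ × ℂ) :=
    fun t => fibreTranslation (Multiplicative.ofAdd (t * (Real.pi * I)))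
  have Tmul : ∀ s t, T s * T t = T (s + t) := by
    intro s t; simp only [T]; rw [← map_mul, ← ofAdd_add, add_mul]
  have Tpow : ∀ s (n : ℕ), T s ^ n = T (n * s) := by
    intro s n; simp only [T]; rw [← map_pow, ← ofAdd_nsmul, nsmul_eq_mul, mul_assoc]
  have Tzpow : ∀ s (n : ℤ), T s ^ n = T (n * s) := by
    intro s n; simp only [T]; rw [← map_zpow, ← ofAdd_zsmul, zsmul_eq_mul, mul_assoc]
  have cX : ∀ t, Commute X (T t) := fun t => fibreTranslation_comm _ _ _
  have cY : ∀ t, Commute Y (T t) := fun t => fibreTranslation_comm _ _ _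
  replace hA : X ^ 2 = T 1 := by simpa [T] using hA
  replace hB : Y ^ 3 = T 1 := by simpa [T] using hB
  replace hAB : (X * Y) ^ r = T (r - 1) := hAB
  obtain ⟨ρ, -, -, hρ⟩ := exists_hom r q (X * T ((W - 1) / 2)) (Y * T ((W - 1) / 3)) (T W)
    (by rw [(cX _).mul_pow, hA, Tpow, Tmul]; congr 1; push_cast; ring)
    (by rw [(cY _).mul_pow, hB, Tpow, Tmul]; congr 1; push_cast; ring)
    (by
      have : X * T ((W - 1) / 2) * (Y * T ((W - 1) / 3)) = X * Y * T ((W - 1) / 2 + (W - 1) / 3) := by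
        rw [← Tmul, mul_assoc, ← mul_assoc (T _), ← (cY _).eq]; simp only [mul_assoc]
      rw [this, ((cX _).mul_left (cY _)).mul_pow, hAB, Tpow, Tmul, Tzpow]
      congr 1
      linear_combination (-1 / 6 : ℂ) * hW')
  have h1 := congrArg ρ hn
  rw [map_zpow, hρ, Tzpow, map_one] at h1
  have h2 := fibreTranslation_injective (h1.trans (map_one _).symm)
  have h3 : (n * W) * (Real.pi * I) = 0 := h2
  simpa [hW0, hpi, Real.pi_ne_zero] using h3

/-! ### Inversions -/

/-- An inversion differs from conjugation by `s` by powers of the central element `f`. As `f` has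
infinite order, the relations force these powers to be trivial, which determines `k` and `l`. -/
theorem inversion_exponents {G : Type*} [Group G] (s t f : G) (r : ℕ) (q k l : ℤ)
    (hs : s ^ 2 = f) (ht : t ^ 3 = f) (hst : (s * t) ^ r = f ^ q)
    (hq : 6 * q - 5 * (r : ℤ) ≠ 0) (hf : ∀ n : ℤ, f ^ n = 1 → n = 0)
    (hcen : ∀ x, Commute f x)
    (g h : G) (hg : g = s * t * s * t⁻¹ * f ^ k) (hh : h = t⁻¹ * s * t * s * f ^ l)
    (hgen : Subgroup.closure {g, h} = ⊤) (α : G ≃* G) (hαg : α g = g⁻¹) (hαh : α h = h⁻¹) :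
    k = -1 ∧ l = -1 := by
  have hcz : ∀ (n : ℤ) x, x * f ^ n = f ^ n * x := fun n x => ((hcen x).zpow_left n).eq.symm
  have hss : s * s = f := by rw [← hs, sq]
  have hinj : ∀ m n : ℤ, f ^ m = f ^ n → m = n := fun m n hmn => by
    have := hf (m - n) (by rw [zpow_sub, hmn, mul_inv_cancel])
    omega
  have hcf : ∀ x, x * f = f * x := fun x => (hcen x).eq.symm
  have hconj : ∀ (P : G) (m : ℤ), s * P * s⁻¹ = P⁻¹ * f ^ (2 : ℤ) →
      (P * f ^ m)⁻¹ = s * (P * f ^ m) * s⁻¹ * f ^ (-2 * m - 2) := by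
    intro P m hP
    calc (P * f ^ m)⁻¹ = P⁻¹ * f ^ (-m) := by rw [hcz, mul_inv_rev, zpow_neg]
      _ = P⁻¹ * f ^ (2 : ℤ) * f ^ m * f ^ (-2 * m - 2) := by
          rw [mul_assoc, mul_assoc, ← zpow_add, ← zpow_add]; congr 2; ring
      _ = s * (P * f ^ m) * s⁻¹ * f ^ (-2 * m - 2) := by
          rw [← hP, mul_assoc _ s⁻¹, hcz m s⁻¹]; simp only [mul_assoc]
  have hg1 : g⁻¹ = s * g * s⁻¹ * f ^ (-2 * k - 2) := by
    rw [hg]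
    refine hconj _ _ ?_
    rw [hcz, eq_mul_inv_iff_mul_eq]
    calc s * (s * t * s * t⁻¹) * s⁻¹ * (s * t * s * t⁻¹)
        = (s * s) * (t * (s * s) * t⁻¹) := by group
      _ = f ^ (2 : ℤ) := by rw [hss, hcf, mul_inv_cancel_right, zpow_ofNat, sq]
  have hh1 : h⁻¹ = s * h * s⁻¹ * f ^ (-2 * l - 2) := by
    rw [hh]
    refine hconj _ _ ?_
    rw [eq_inv_mul_iff_mul_eq]
    calc t⁻¹ * s * t * s * (s * (t⁻¹ * s * t * s) * s⁻¹)
        = t⁻¹ * s * (t * (s * s) * t⁻¹) * s * t := by group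
      _ = t⁻¹ * (s * f) * s * t := by rw [hss, hcf t, mul_inv_cancel_right]; simp only [mul_assoc]
      _ = t⁻¹ * f * (s * s) * t := by rw [hcf s]; simp only [mul_assoc]
      _ = f ^ (2 : ℤ) := by
        rw [hss, hcf t⁻¹, mul_assoc f, hcf t⁻¹, mul_assoc f, mul_assoc f, inv_mul_cancel, mul_one,
          zpow_ofNat, sq]
  have key : ∀ x, ∃ n : ℤ, α x = s * x * s⁻¹ * f ^ n := by
    intro x
    have hx : x ∈ Subgroup.closure {g, h} := hgen ▸ Subgroup.mem_top x
    induction hx using Subgroup.closure_induction with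
    | mem x hx =>
      rcases hx with rfl | rfl
      · exact ⟨_, hαg.trans hg1⟩
      · exact ⟨_, hαh.trans hh1⟩
    | one => exact ⟨0, by simp⟩
    | mul x y _ _ hx hy =>
      obtain ⟨m, hm⟩ := hx
      obtain ⟨n, hn⟩ := hy
      refine ⟨m + n, ?_⟩
      rw [map_mul, hm, hn, zpow_add, mul_assoc (s * x * s⁻¹), ← mul_assoc (f ^ m), ← hcz]
      group
    | inv x _ hx =>
      obtain ⟨m, hm⟩ := hx
      refine ⟨-m, ?_⟩
      rw [map_inv, hm, hcz]
      group
  obtain ⟨a, ha⟩ := key s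
  obtain ⟨b, hb⟩ := key t
  obtain ⟨c, hc⟩ := key f
  have hpow : ∀ (x : G) (m : ℤ) (n : ℕ), (s * x * s⁻¹ * f ^ m) ^ n = s * x ^ n * s⁻¹ * f ^ (n * m) := by
    intro x m n
    have : Commute (s * x * s⁻¹) (f ^ m) := hcz m _
    rw [this.mul_pow, conj_pow, ← zpow_natCast (f ^ m), ← zpow_mul, mul_comm m]
  have e1 : 2 * a = c := by
    have := congrArg α hs
    rw [map_pow, ha, hc, hpow, hs] at this
    simpa using hinj _ _ (mul_left_cancel this)
  have e2 : 3 * b = c := by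
    have := congrArg α ht
    rw [map_pow, hb, hc, hpow, ht] at this
    simpa using hinj _ _ (mul_left_cancel this)
  have hfc : α f = f ^ (1 + c) := by
    rw [hc, hcf s, mul_inv_cancel_right, zpow_add, zpow_one]
  have e3 : r * (a + b) = q * c := by
    have := congrArg α hst
    have h2 : α (s * t) = s * (s * t) * s⁻¹ * f ^ (a + b) := by
      rw [map_mul, ha, hb, zpow_add, mul_assoc (s * s * s⁻¹), ← mul_assoc (f ^ a), ← hcz]
      group
    rw [map_pow, h2, hpow, hst, hcz q s, mul_inv_cancel_right, map_zpow, hfc, ← zpow_mul, ← zpow_add] at this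
    have := hinj _ _ this
    linarith
  have hc0 : c = 0 := by
    have : (6 * q - 5 * (r : ℤ)) * c = 0 := by
      linear_combination (-6) * e3 + 3 * r * e1 + 2 * r * e2
    exact (mul_eq_zero.1 this).resolve_left hq
  have ha0 : a = 0 := by omega
  have hb0 : b = 0 := by omega
  rw [ha0, zpow_zero, mul_one] at ha
  rw [hb0, zpow_zero, mul_one] at hb
  rw [hc0, zpow_zero, mul_one] at hc
  have hconj_g : α g = s * g * s⁻¹ := by
    rw [hg]; simp only [map_mul, map_inv, map_zpow, ha, hb, hc, conj_zpow]; group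
  have hconj_h : α h = s * h * s⁻¹ := by
    rw [hh]; simp only [map_mul, map_inv, map_zpow, ha, hb, hc, conj_zpow]; group
  have hk := hf _ (left_eq_mul.1 ((hconj_g.symm.trans hαg).trans hg1))
  have hl := hf _ (left_eq_mul.1 ((hconj_h.symm.trans hαh).trans hh1))
  constructor <;> omega

theorem F_commute (r : ℕ) (q : ℤ) (x : Sft r q) : Commute (F r q) x := by
  have hx : x ∈ Subgroup.closure (Set.range (PresentedGroup.of (rels := seifertRels r q))) := by
    rw [PresentedGroup.closure_range_of]; trivial
  induction hx using Subgroup.closure_induction with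
  | mem x hx =>
    obtain ⟨i, rfl⟩ := hx
    fin_cases i
    · change Commute (F r q) (S₁ r q)
      rw [← S₁_sq]; exact (Commute.refl _).pow_left 2
    · change Commute (F r q) (S₂ r q)
      rw [← S₂_cube]; exact (Commute.refl _).pow_left 3
    · exact Commute.refl (F r q)
  | one => exact Commute.one_right _
  | mul x y _ _ hx hy => exact hx.mul_right hy
  | inv x _ hx => exact hx.inv_right

end

theorem stmt16 (r : ℕ) (hr : 7 ≤ r) (hgcd : Nat.gcd 6 r = 1) (q : ℤ) (k l : ℤ)
    (g h : Sft r q)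
    (hg : g = S₁ r q * S₂ r q * S₁ r q * (S₂ r q)⁻¹ * F r q ^ k)
    (hh : h = (S₂ r q)⁻¹ * S₁ r q * S₂ r q * S₁ r q * F r q ^ l)
    (hgen : Subgroup.closure {g, h} = ⊤)
    (hinv : ∃ α : Sft r q ≃* Sft r q, α g = g⁻¹ ∧ α h = h⁻¹) :
    k = -1 ∧ l = -1 ∧ (6 * q - 5 * (r : ℤ) = 1 ∨ 6 * q - 5 * (r : ℤ) = -1) := by
  have hq : 6 * q - 5 * (r : ℤ) ≠ 0 := by
    intro h0
    have h6 : 6 ∣ r := by omega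
    rw [Nat.gcd_eq_left h6] at hgcd
    omega
  obtain ⟨α, hαg, hαh⟩ := hinv
  obtain ⟨hk, hl⟩ := inversion_exponents (S₁ r q) (S₂ r q) (F r q) r q k l (S₁_sq r q) (S₂_cube r q)
    (S₁_mul_S₂_pow r q) hq (F_zpow_eq_one r hr q hq) (F_commute r q) g h hg hh hgen α hαg hαh
  refine ⟨hk, hl, ?_⟩
  -- the abelianization `ℤ/(6q - 5r)`, with `s₁, s₂, f` sent to `3, 2, 6`
  set N := (6 * q - 5 * (r : ℤ)).natAbs with hN
  have hNz : ((6 * q - 5 * (r : ℤ) : ℤ) : ZMod N) = 0 := by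
    rw [ZMod.intCast_zmod_eq_zero_iff_dvd]; exact Int.natAbs_dvd.2 dvd_rfl
  push_cast at hNz
  obtain ⟨ρ, h1, h2, h3⟩ := exists_hom (H := Multiplicative (ZMod N)) r q (Multiplicative.ofAdd 3)
    (Multiplicative.ofAdd 2) (Multiplicative.ofAdd 6)
    (by rw [← ofAdd_nsmul]; congr 1; norm_num)
    (by rw [← ofAdd_nsmul]; congr 1; norm_num)
    (by
      rw [← ofAdd_add, ← ofAdd_nsmul, ← ofAdd_zsmul]
      congr 1
      rw [nsmul_eq_mul, zsmul_eq_mul]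
      linear_combination -hNz)
  have hker : Subgroup.closure {g, h} ≤ ρ.ker := by
    rw [Subgroup.closure_le]
    rintro x (rfl | rfl) <;> change ρ _ = 1
    · rw [hg, hk]
      simp only [map_mul, map_inv, map_zpow, h1, h2, h3, ← ofAdd_add, ← ofAdd_neg, ← ofAdd_zsmul]
      rw [ofAdd_eq_one]
      norm_num
    · rw [hh, hl]
      simp only [map_mul, map_inv, map_zpow, h1, h2, h3, ← ofAdd_add, ← ofAdd_neg, ← ofAdd_zsmul]
      rw [ofAdd_eq_one]
      norm_num
  have hone : ρ (S₁ r q * (S₂ r q)⁻¹) = 1 := hker (hgen ▸ Subgroup.mem_top _)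
  rw [map_mul, map_inv, h1, h2, ← ofAdd_neg, ← ofAdd_add, ofAdd_eq_one] at hone
  have hone' : ((1 : ℕ) : ZMod N) = 0 := by push_cast; linear_combination hone
  have : N ∣ 1 := (ZMod.natCast_eq_zero_iff 1 N).1 hone'
  rw [Nat.dvd_one] at this
  omega
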